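/- arXiv:math/0612331 — 3 statements merged into one kernel-verified Lean document; each statement's English description precedes it below -/
import Mathlib

section
/- Let H be an induced subgraph of a graph G with mr(F₂,H) = k, and suppose G ∈ F_{k+1}(F₂,H). If |V(G)| − |V(H)| ≥ 3, then every vertex of G−H is adjacent in G to at least one vertex of H (i.e., G−H contains no vertex whose weight vector with respect to H is the zero vector). -/
/-!
Suppose `z ∉ W` has no neighbour in `W`. For each `u ∉ W` other than `z`, a matrix of `G - u` of
rank at most `k` contains a matrix of `H` as a principal submatrix, whose rank is at least `k`;
hence its rows indexed by `W` span its whole row space. The column of `z` vanishes in those rows,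
so it vanishes everywhere (`entry_eq_zero_of_rank_le`), and `z` is isolated in `G - u`
(`not_adj_of_zero_weight`). At least two choices of `u` are available, so `z` is isolated in `G`.
Adjoining a zero row and a zero column to a matrix of `G - z` then gives `mr(G) ≤ mr(G - z) ≤ k`
(`minRank_le_of_isolated`), a contradiction. Nothing here is special to the field `F₂`.
-/

open Matrix

/-- `A` is a symmetric matrix over `F` whose off-diagonal nonzero pattern is
given by the graph `G` (diagonal entries are unconstrained). -/
def IsGraphMatrix (F : Type*) [Field F] {V : Type*} (G : SimpleGraph V)
    (A : Matrix V V F) : Prop :=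
  A.IsSymm ∧ ∀ i j : V, i ≠ j → (A i j ≠ 0 ↔ G.Adj i j)

/-- The minimum rank `mr(F, G)` of the graph `G` over the field `F`. -/
noncomputable def minRank (F : Type*) [Field F] {V : Type*} [Fintype V]
    (G : SimpleGraph V) : ℕ :=
  sInf {r : ℕ | ∃ A : Matrix V V F, IsGraphMatrix F G A ∧ A.rank = r}

/-- The graph `G - v` obtained from `G` by deleting the vertex `v`. -/
def deleteVert {V : Type*} (G : SimpleGraph V) (v : V) : SimpleGraph {u : V // u ≠ v} :=
  SimpleGraph.comap Subtype.val G

/-- The induced subgraph of `G` on a finite set `W` of vertices. -/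
def inducedSub {V : Type*} (G : SimpleGraph V) (W : Finset V) :
    SimpleGraph {x : V // x ∈ W} :=
  SimpleGraph.comap Subtype.val G

lemma minRank_le_rank {F V : Type*} [Field F] [Fintype V] {G : SimpleGraph V}
    {A : Matrix V V F} (hA : IsGraphMatrix F G A) : minRank F G ≤ A.rank :=
  Nat.sInf_le ⟨A, hA, rfl⟩

/-- The minimum rank is attained: the infimum defining it is over a nonempty set. -/
lemma exists_rank_eq_minRank (F : Type*) {V : Type*} [Field F] [Fintype V] (G : SimpleGraph V) :
    ∃ A : Matrix V V F, IsGraphMatrix F G A ∧ A.rank = minRank F G := by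
  classical
  refine Nat.sInf_mem (s := {r : ℕ | ∃ A : Matrix V V F, IsGraphMatrix F G A ∧ A.rank = r})
    ⟨_, G.adjMatrix F, ⟨G.isSymm_adjMatrix, fun i j _ => ?_⟩, rfl⟩
  simp [SimpleGraph.adjMatrix_apply]

/-- If a principal submatrix of a symmetric matrix has full rank, then the rows through it span
all rows, so a row vanishing on the columns of the submatrix is zero. -/
lemma entry_eq_zero_of_rank_le {F U V : Type*} [Field F] [Fintype U] [Fintype V]
    {A : Matrix V V F} (hA : A.IsSymm) (f : U → V)
    (hrank : A.rank ≤ (A.submatrix f f).rank) {z : V} (hz : ∀ w, A z (f w) = 0) (y : V) :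
    A z y = 0 := by
  classical
  have hle : Submodule.span F (Set.range (A.submatrix f id).row) ≤
      Submodule.span F (Set.range A.row) := by
    refine Submodule.span_mono ?_
    rintro _ ⟨w, rfl⟩
    exact ⟨f w, rfl⟩
  have hcols : (A.submatrix f f).rank ≤ (A.submatrix f id).rank := by
    -- selecting columns is right multiplication by a 0-1 matrix
    have h : A.submatrix f f = A.submatrix f id * (1 : Matrix V V F).submatrix id f := by
      ext i j
      simp [Matrix.mul_apply, Matrix.one_apply]
    rw [h]
    exact Matrix.rank_mul_le_left _ _
  have hspan := Submodule.eq_of_le_of_finrank_le hle (by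
    rw [← Matrix.rank_eq_finrank_span_row, ← Matrix.rank_eq_finrank_span_row]
    exact hrank.trans hcols)
  have hy : A.row y ∈ Submodule.span F (Set.range (A.submatrix f id).row) := by
    rw [hspan]
    exact Submodule.subset_span ⟨y, rfl⟩
  have hker : Submodule.span F (Set.range (A.submatrix f id).row) ≤
      LinearMap.ker (LinearMap.proj z : (V → F) →ₗ[F] F) := by
    rw [Submodule.span_le]
    rintro _ ⟨w, rfl⟩
    change A (f w) z = 0
    rw [hA.apply]
    exact hz w
  have h0 : A y z = 0 := hker hy
  rwa [hA.apply] at h0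

/-- A vertex with no neighbour in `W` is isolated in `G - u` as soon as deleting `u` leaves a
graph whose minimum rank is at most that of `G[W]`. -/
lemma not_adj_of_zero_weight {F V : Type*} [Field F] [Fintype V] [DecidableEq V]
    {G : SimpleGraph V} {W : Finset V} {u z : V} (hu : u ∉ W) (hzW : z ∉ W) (hzu : z ≠ u)
    (hrank : minRank F (deleteVert G u) ≤ minRank F (inducedSub G W))
    (hz : ∀ w ∈ W, ¬ G.Adj z w) {y : V} (hy : y ≠ u) : ¬ G.Adj z y := by
  obtain ⟨A, ⟨hsymm, hA⟩, hAr⟩ := exists_rank_eq_minRank F (deleteVert G u)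
  have hne : ∀ w ∈ W, w ≠ u := fun w hw h => hu (h ▸ hw)
  let f : {x : V // x ∈ W} → {x : V // x ≠ u} := fun w => ⟨w, hne w w.2⟩
  have hsub : IsGraphMatrix F (inducedSub G W) (A.submatrix f f) :=
    ⟨hsymm.submatrix f, fun i j hij => hA (f i) (f j) fun h =>
      hij (Subtype.ext (show (f i : V) = f j from congrArg Subtype.val h))⟩
  have hzero : ∀ w, A ⟨z, hzu⟩ (f w) = 0 := by
    intro w
    by_contra h
    refine hz w w.2 ((hA ⟨z, hzu⟩ (f w) fun h' => ?_).1 h)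
    have h'' : z = w := congrArg Subtype.val h'
    exact hzW (h'' ▸ w.2)
  intro hadj
  refine (hA ⟨z, hzu⟩ ⟨y, hy⟩ fun h => hadj.ne (congrArg Subtype.val h)).2 hadj ?_
  exact entry_eq_zero_of_rank_le hsymm f
    (hAr.le.trans (hrank.trans (minRank_le_rank hsub))) hzero _

/-- Adjoining an isolated vertex does not increase the minimum rank. -/
lemma minRank_le_of_isolated {F V : Type*} [Field F] [Fintype V] [DecidableEq V]
    {G : SimpleGraph V} {z : V} (hz : ∀ y, ¬ G.Adj z y) :
    minRank F G ≤ minRank F (deleteVert G z) := by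
  obtain ⟨A, ⟨hsymm, hA⟩, hAr⟩ := exists_rank_eq_minRank F (deleteVert G z)
  -- `P * A * Pᵀ` is `A` with a zero row and a zero column inserted at `z`
  let P : Matrix V {x : V // x ≠ z} F := (1 : Matrix V V F).submatrix id Subtype.val
  have hleft : ∀ j, (P * A) z j = 0 := fun j => by
    rw [Matrix.mul_apply]
    exact Finset.sum_eq_zero fun x _ => by simp [P, x.2.symm]
  have hPA : ∀ (i : {x : V // x ≠ z}) j, (P * A) i j = A i j := fun i j => by
    simp [P, Matrix.mul_apply, Matrix.one_apply, ← Subtype.ext_iff]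
  have hPAP : ∀ i (j : {x : V // x ≠ z}), (P * A * Pᵀ) i j = (P * A) i j := fun i j => by
    rw [Matrix.mul_apply]
    simp [P, Matrix.one_apply, ← Subtype.ext_iff]
  have hrow : ∀ j, (P * A * Pᵀ) z j = 0 := fun j => by
    rw [Matrix.mul_apply]
    exact Finset.sum_eq_zero fun x _ => by rw [hleft, zero_mul]
  have hB : (P * A * Pᵀ).IsSymm := by
    rw [Matrix.IsSymm, Matrix.transpose_mul, Matrix.transpose_mul, Matrix.transpose_transpose,
      hsymm.eq, Matrix.mul_assoc]
  have hgraph : IsGraphMatrix F G (P * A * Pᵀ) := by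
    refine ⟨hB, fun i j hij => ?_⟩
    by_cases hi : i = z
    · subst hi
      simp [hrow, hz]
    by_cases hj : j = z
    · subst hj
      rw [← hB.apply, G.adj_comm]
      simp [hrow, hz]
    have h : (P * A * Pᵀ) i j = A ⟨i, hi⟩ ⟨j, hj⟩ :=
      (hPAP i ⟨j, hj⟩).trans (hPA ⟨i, hi⟩ ⟨j, hj⟩)
    rw [h]
    exact hA ⟨i, hi⟩ ⟨j, hj⟩ fun h => hij (congrArg Subtype.val h)
  exact (minRank_le_rank hgraph).trans
    ((Matrix.rank_mul_le_left _ _).trans ((Matrix.rank_mul_le_right _ _).trans hAr.le))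

/-- Let `H = G[W]` be an induced subgraph of `G` with `mr(F₂, H) = k`, and suppose
`G ∈ F_{k+1}(F₂, H)` (witnessed by this copy of `H`).  If `|V(G)| - |V(H)| ≥ 3`, then
every vertex of `G - H` is adjacent in `G` to at least one vertex of `H`
(no vertex of `G - H` has zero weight vector). -/
theorem no_zero_weight_vertex {V : Type*} [Fintype V] [DecidableEq V]
    (G : SimpleGraph V) (W : Finset V) (k : ℕ)
    (hH : minRank (ZMod 2) (inducedSub G W) = k)
    (hG : k + 1 ≤ minRank (ZMod 2) G)
    (hdel : ∀ v : V, v ∉ W → minRank (ZMod 2) (deleteVert G v) ≤ k)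
    (hcard : 3 ≤ Wᶜ.card) :
    ∀ v : V, v ∉ W → ∃ w ∈ W, G.Adj v w := by
  intro z hzW
  by_contra! hz
  have key : ∀ u, u ∉ W → z ≠ u → ∀ y, y ≠ u → ¬ G.Adj z y := fun u hu hzu y hy =>
    not_adj_of_zero_weight (F := ZMod 2) hu hzW hzu ((hdel u hu).trans hH.ge) hz hy
  -- two distinct vertices outside `W` other than `z`
  have htwo : 1 < (Wᶜ.erase z).card := by
    rw [Finset.card_erase_of_mem (Finset.mem_compl.2 hzW)]
    omega
  obtain ⟨a, ha, b, hb, hab⟩ := Finset.one_lt_card.1 htwo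
  simp only [Finset.mem_erase, Finset.mem_compl] at ha hb
  have hiso : ∀ y, ¬ G.Adj z y := by
    intro y
    by_cases hya : y = a
    · exact key b hb.2 hb.1.symm y (hya ▸ hab)
    · exact key a ha.2 ha.1.symm y hya
  have := minRank_le_of_isolated (F := ZMod 2) hiso
  have := hdel z hzW
  omega
end

section
/- If G ∈ F₄(F₂, 3K₂) or G ∈ F₄(F₂, P₃∨P₃), then |V(G)| ≤ 8. Here 3K₂ is the disjoint union of three edges (6 vertices) and P₃∨P₃ is the join of two copies of the path on 3 vertices. -/
/-!
For each of the two graphs `H`, the matrices of rank at most 3 over `𝔽₂` with pattern `H` all have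
the same principal `3 × 3` block on a suitable triple `s` of vertices, and this block is invertible,
with inverse `Q` say (`threeK2_unique`, `P3joinP3_unique`). A matrix of rank at most 3 is determined by its
columns through such a block: `A i j = A i s * Q * A s j` (`eq_of_rank_le`). Hence, for any induced
copy of `H` in `G`, there is only one candidate for a matrix of rank at most 3 with pattern `G`,
and whether its `(i, j)` entry fits `G` depends only on the subgraph induced on the copy of `H`
together with `i` and `j`.

If `G` had at least 9 vertices, then for any `i` and `j` there would be a vertex `v` outside the copy
of `H` and different from `i` and `j`. A matrix of rank at most 3 for `G - v` exists and agrees with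
the candidate, so the entry `(i, j)` fits `G`. Thus the candidate has pattern `G`, and
`mr(𝔽₂, G) ≤ 3`, a contradiction (`card_le_eight_of_unique`).
-/

open Matrix

/-- `G ∈ F_K(F, H)`: `G` contains `H` as an induced subgraph, `mr(F, G) ≥ K`, and for
some induced copy of `H` in `G` (an embedding `f : H ↪g G`), `mr(F, G - v) ≤ K - 1`
for every vertex `v` of `G` outside that copy. -/
def MemForbRel (F : Type*) [Field F] (K : ℕ) {VH VG : Type*} [Fintype VH] [Fintype VG]
    [DecidableEq VG] (H : SimpleGraph VH) (G : SimpleGraph VG) : Prop :=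
  K ≤ minRank F G ∧
    ∃ f : H ↪g G, ∀ v : VG, v ∉ Set.range f → minRank F (deleteVert G v) + 1 ≤ K

/-- `3K₂`: the disjoint union of three edges, on vertices `{0, …, 5}`. -/
def threeK2 : SimpleGraph (Fin 6) := SimpleGraph.fromEdgeSet {s(0,1), s(2,3), s(4,5)}

/-- `P₃ ∨ P₃`: the join of the two paths `0 - 1 - 2` and `3 - 4 - 5`. -/
def P3joinP3 : SimpleGraph (Fin 6) :=
  SimpleGraph.fromEdgeSet {s(0,1), s(1,2), s(3,4), s(4,5),
    s(0,3), s(0,4), s(0,5), s(1,3), s(1,4), s(1,5), s(2,3), s(2,4), s(2,5)}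

theorem exists_isGraphMatrix_rank_eq_minRank (F : Type*) [Field F] {V : Type*} [Fintype V]
    (G : SimpleGraph V) : ∃ A : Matrix V V F, IsGraphMatrix F G A ∧ A.rank = minRank F G := by
  classical
  have hne : {r : ℕ | ∃ A : Matrix V V F, IsGraphMatrix F G A ∧ A.rank = r}.Nonempty := by
    refine ⟨_, G.adjMatrix F, ⟨G.isSymm_adjMatrix, fun i j _ => ?_⟩, rfl⟩
    simp [SimpleGraph.adjMatrix_apply]
  exact Nat.sInf_mem hne

theorem det_submatrix_eq_zero_of_rank_lt {F : Type*} [Field F] {W n : Type*} [Fintype W]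
    [Fintype n] [DecidableEq n] (A : Matrix W W F) (f g : n → W)
    (h : A.rank < Fintype.card n) : (A.submatrix f g).det = 0 := by
  by_contra hdet
  have h1 := Matrix.rank_of_isUnit (A.submatrix f g)
    ((Matrix.isUnit_iff_isUnit_det _).2 (isUnit_iff_ne_zero.2 hdet))
  have h2 := Matrix.rank_submatrix_le A f g
  omega

/-- A matrix of rank at most 3 with an invertible principal block on `s` is determined by the
rows and columns through that block, since the Schur complement of the block vanishes. -/
theorem eq_of_rank_le {F : Type*} [Field F] {W : Type*} [Fintype W] (A : Matrix W W F)
    (h : A.rank ≤ 3) (s : Fin 3 → W) (Q : Matrix (Fin 3) (Fin 3) F)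
    (hQ : A.submatrix s s * Q = 1) (i j : W) :
    A i j = ∑ b, (∑ a, A i (s a) * Q a b) * A (s b) j := by
  have hdet := det_submatrix_eq_zero_of_rank_lt A (Sum.elim s fun _ : Unit => i)
    (Sum.elim s fun _ : Unit => j) (by simp; omega)
  have hblock : A.submatrix (Sum.elim s fun _ : Unit => i) (Sum.elim s fun _ : Unit => j) =
      fromBlocks (A.submatrix s s) (A.submatrix s fun _ => j) (A.submatrix (fun _ => i) s)
        (A.submatrix (fun _ => i) fun _ => j) := by
    ext (x | x) (y | y) <;> rfl
  let _ : Invertible (A.submatrix s s) := invertibleOfRightInverse _ _ hQ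
  have hinv : ⅟(A.submatrix s s) = Q := invOf_eq_right_inv hQ
  rw [hblock, det_fromBlocks₁₁, hinv] at hdet
  have h0 : (A.submatrix s s).det ≠ 0 := (isUnit_det_of_invertible _).ne_zero
  have h1 := (mul_eq_zero.1 hdet).resolve_left h0
  rw [det_unique, Matrix.sub_apply, sub_eq_zero] at h1
  simpa [Matrix.mul_apply] using h1

theorem zmod_two_eq_ite {x : ZMod 2} {p : Prop} [Decidable p] (h : x ≠ 0 ↔ p) :
    x = if p then 1 else 0 := by
  split_ifs with hp
  · exact (by decide : ∀ y : ZMod 2, y ≠ 0 → y = 1) x (h.2 hp)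
  · by_contra hx
    exact hp (h.1 hx)

/-- If every matrix of rank at most 3 with pattern `H` has the invertible matrix `N` as its
principal block on `s`, then a graph in `F₄(𝔽₂, H)` has at most 8 vertices. -/
theorem card_le_eight_of_unique (H : SimpleGraph (Fin 6)) (s : Fin 3 → Fin 6)
    (N Q : Matrix (Fin 3) (Fin 3) (ZMod 2)) (hQ : Q.IsSymm) (hNQ : N * Q = 1)
    (huniq : ∀ A, IsGraphMatrix (ZMod 2) H A → A.rank ≤ 3 → A.submatrix s s = N)
    {V : Type*} [Fintype V] [DecidableEq V] (G : SimpleGraph V)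
    (h : MemForbRel (ZMod 2) 4 H G) : Fintype.card V ≤ 8 := by
  classical
  obtain ⟨hmr, f, hf⟩ := h
  by_contra hcard
  -- The columns through the block of the only possible matrix of rank at most 3 for `G`.
  let m : Matrix V (Fin 3) (ZMod 2) := fun i a =>
    if i = f (s a) then N a a else if G.Adj i (f (s a)) then 1 else 0
  have key : ∀ i j, i ≠ j → ((m * Q * mᵀ) i j ≠ 0 ↔ G.Adj i j) := by
    intro i j hij
    obtain ⟨v, hv⟩ : ∃ v, v ∉ Finset.univ.image f ∪ {i, j} := by
      by_contra! hall
      have h1 : (Finset.univ : Finset V).card ≤ (Finset.univ.image f ∪ {i, j}).card :=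
        Finset.card_le_card fun x _ => hall x
      have h2 := Finset.card_union_le (Finset.univ.image f) {i, j}
      have h3 : (Finset.univ.image f).card ≤ 6 := Finset.card_image_le
      have h4 : ({i, j} : Finset V).card ≤ 2 := Finset.card_le_two
      rw [Finset.card_univ] at h1
      omega
    simp only [Finset.mem_union, Finset.mem_image, Finset.mem_univ, true_and, Finset.mem_insert,
      Finset.mem_singleton, not_or, not_exists] at hv
    obtain ⟨hvf, hvi, hvj⟩ := hv
    have hlt := hf v (by rintro ⟨k, hk⟩; exact hvf k hk)
    obtain ⟨A, ⟨hsym, hA⟩, hrank⟩ :=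
      exists_isGraphMatrix_rank_eq_minRank (ZMod 2) (deleteVert G v)
    have hA3 : A.rank ≤ 3 := by omega
    let g : Fin 6 → {u : V // u ≠ v} := fun k => ⟨f k, hvf k⟩
    have hblock : A.submatrix (g ∘ s) (g ∘ s) = N := by
      refine huniq (A.submatrix g g) ⟨hsym.submatrix g, fun x y hxy => ?_⟩
        ((Matrix.rank_submatrix_le A g g).trans hA3)
      have hne : g x ≠ g y := fun e => hxy (f.injective (congrArg Subtype.val e))
      rw [submatrix_apply, hA _ _ hne]
      exact f.map_adj_iff
    have hm : ∀ (x : {u : V // u ≠ v}) a, A x (g (s a)) = m x a := by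
      intro x a
      by_cases hx : x = g (s a)
      · have h1 := congrFun (congrFun hblock a) a
        simp only [submatrix_apply, Function.comp_apply] at h1
        simp [m, g, ← h1, hx]
      · have h2 : (x : V) ≠ f (s a) := fun e => hx (Subtype.ext e)
        have h3 := zmod_two_eq_ite (p := G.Adj x (f (s a))) (hA _ _ hx)
        simp [m, h2, h3]
    have hi : i ≠ v := fun e => hvi e.symm
    have hj : j ≠ v := fun e => hvj e.symm
    have hform := eq_of_rank_le A hA3 (g ∘ s) Q (by rw [hblock, hNQ]) ⟨i, hi⟩ ⟨j, hj⟩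
    have hMA : (m * Q * mᵀ) i j = A ⟨i, hi⟩ ⟨j, hj⟩ := by
      rw [hform]
      simp only [Matrix.mul_apply, transpose_apply, Function.comp_apply]
      refine Finset.sum_congr rfl fun b _ => ?_
      rw [← hsym.apply (g (s b)) ⟨j, hj⟩, hm]
      simp only [hm]
    rw [hMA, hA _ _ (fun e => hij (congrArg Subtype.val e))]
    rfl
  have hsymm : (m * Q * mᵀ).IsSymm := by
    rw [Matrix.IsSymm, transpose_mul, transpose_mul, transpose_transpose, hQ.eq, Matrix.mul_assoc]
  have hle : minRank (ZMod 2) G ≤ (m * Q * mᵀ).rank := Nat.sInf_le ⟨_, ⟨hsymm, key⟩, rfl⟩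
  have h3 : (m * Q * mᵀ).rank ≤ 3 :=
    (rank_mul_le_left _ _).trans ((rank_mul_le_left _ _).trans (by simpa using m.rank_le_card_width))
  omega

theorem det_fin_four_expand {R : Type*} [CommRing R] (M : Matrix (Fin 4) (Fin 4) R) :
    M.det =
      M 0 0 * (M 1 1 * (M 2 2 * M 3 3 - M 2 3 * M 3 2) - M 1 2 * (M 2 1 * M 3 3 - M 2 3 * M 3 1) +
        M 1 3 * (M 2 1 * M 3 2 - M 2 2 * M 3 1)) -
      M 0 1 * (M 1 0 * (M 2 2 * M 3 3 - M 2 3 * M 3 2) - M 1 2 * (M 2 0 * M 3 3 - M 2 3 * M 3 0) +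
        M 1 3 * (M 2 0 * M 3 2 - M 2 2 * M 3 0)) +
      M 0 2 * (M 1 0 * (M 2 1 * M 3 3 - M 2 3 * M 3 1) - M 1 1 * (M 2 0 * M 3 3 - M 2 3 * M 3 0) +
        M 1 3 * (M 2 0 * M 3 1 - M 2 1 * M 3 0)) -
      M 0 3 * (M 1 0 * (M 2 1 * M 3 2 - M 2 2 * M 3 1) - M 1 1 * (M 2 0 * M 3 2 - M 2 2 * M 3 0) +
        M 1 2 * (M 2 0 * M 3 1 - M 2 1 * M 3 0)) := by
  rw [det_succ_row_zero, Fin.sum_univ_four]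
  simp only [det_fin_three, submatrix_apply]
  have e0 : ∀ k : Fin 3, (0 : Fin 4).succAbove k = ![1, 2, 3] k := by decide
  have e1 : ∀ k : Fin 3, (1 : Fin 4).succAbove k = ![0, 2, 3] k := by decide
  have e2 : ∀ k : Fin 3, (2 : Fin 4).succAbove k = ![0, 1, 3] k := by decide
  have e3 : ∀ k : Fin 3, (3 : Fin 4).succAbove k = ![0, 1, 2] k := by decide
  have s0 : (0 : Fin 3).succ = 1 := rfl
  have s1 : (1 : Fin 3).succ = 2 := rfl
  have s2 : (2 : Fin 3).succ = 3 := rfl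
  simp only [e0, e1, e2, e3, s0, s1, s2]
  simp
  ring

theorem threeK2_unique (A : Matrix (Fin 6) (Fin 6) (ZMod 2))
    (hA : IsGraphMatrix (ZMod 2) threeK2 A) (hr : A.rank ≤ 3) :
    A.submatrix ![0, 2, 4] ![0, 2, 4] = 1 := by
  classical
  have hE : A = !![A 0 0, 1, 0, 0, 0, 0; 1, A 1 1, 0, 0, 0, 0; 0, 0, A 2 2, 1, 0, 0;
      0, 0, 1, A 3 3, 0, 0; 0, 0, 0, 0, A 4 4, 1; 0, 0, 0, 0, 1, A 5 5] := by
    ext i j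
    by_cases hij : i = j
    · subst hij
      fin_cases i <;> rfl
    · rw [zmod_two_eq_ite (hA.2 i j hij)]
      fin_cases i <;> fin_cases j <;> simp [threeK2] at hij ⊢
  have hmin : ∀ f g : Fin 4 → Fin 6, (A.submatrix f g).det = 0 := fun f g =>
    det_submatrix_eq_zero_of_rank_lt A f g (by simpa using Nat.lt_succ_of_le hr)
  generalize A 0 0 = a, A 1 1 = b, A 2 2 = c, A 3 3 = d, A 4 4 = e, A 5 5 = k at hE
  subst hE
  -- These minors are `a * b - 1`, `c * d - 1` and `e * k - 1` up to sign.
  have h1 := hmin ![0, 2, 4, 1] ![1, 3, 5, 0]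
  have h2 := hmin ![2, 0, 4, 3] ![3, 1, 5, 2]
  have h3 := hmin ![4, 0, 2, 5] ![5, 1, 3, 4]
  rw [det_fin_four_expand] at h1 h2 h3
  clear hmin hA hr
  revert a b c d e k
  decide

theorem P3joinP3_unique (A : Matrix (Fin 6) (Fin 6) (ZMod 2))
    (hA : IsGraphMatrix (ZMod 2) P3joinP3 A) (hr : A.rank ≤ 3) :
    A.submatrix ![0, 1, 3] ![0, 1, 3] = !![0, 1, 1; 1, 1, 1; 1, 1, 0] := by
  classical
  have hE : A = !![A 0 0, 1, 0, 1, 1, 1; 1, A 1 1, 1, 1, 1, 1; 0, 1, A 2 2, 1, 1, 1;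
      1, 1, 1, A 3 3, 1, 0; 1, 1, 1, 1, A 4 4, 1; 1, 1, 1, 0, 1, A 5 5] := by
    ext i j
    by_cases hij : i = j
    · subst hij
      fin_cases i <;> rfl
    · rw [zmod_two_eq_ite (hA.2 i j hij)]
      fin_cases i <;> fin_cases j <;> simp [P3joinP3] at hij ⊢
  have hmin : ∀ f g : Fin 4 → Fin 6, (A.submatrix f g).det = 0 := fun f g =>
    det_submatrix_eq_zero_of_rank_lt A f g (by simpa using Nat.lt_succ_of_le hr)
  generalize A 0 0 = a, A 1 1 = b, A 2 2 = c, A 3 3 = d, A 4 4 = e, A 5 5 = k at hE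
  subst hE
  -- The vanishing of these three minors leaves a single choice of the diagonal.
  have h1 := hmin ![0, 1, 2, 3] ![0, 2, 4, 5]
  have h2 := hmin ![0, 1, 3, 4] ![0, 1, 4, 5]
  have h3 := hmin ![0, 1, 3, 5] ![0, 1, 3, 5]
  rw [det_fin_four_expand] at h1 h2 h3
  clear hmin hA hr
  revert a b c d e k
  decide

/-- If `G ∈ F₄(F₂, 3K₂)` or `G ∈ F₄(F₂, P₃ ∨ P₃)`, then `G` has at most 8 vertices. -/
theorem card_le_eight_of_forbRel_threeK2_or_P3joinP3 {V : Type*} [Fintype V] [DecidableEq V]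
    (G : SimpleGraph V)
    (h : MemForbRel (ZMod 2) 4 threeK2 G ∨ MemForbRel (ZMod 2) 4 P3joinP3 G) :
    Fintype.card V ≤ 8 := by
  rcases h with h | h
  · exact card_le_eight_of_unique threeK2 ![0, 2, 4] 1 1 (by decide) (by decide)
      threeK2_unique G h
  · exact card_le_eight_of_unique P3joinP3 ![0, 1, 3] !![0, 1, 1; 1, 1, 1; 1, 1, 0]
      !![1, 1, 0; 1, 1, 1; 0, 1, 1] (by decide) (by decide) P3joinP3_unique G h
end

section
/- If G ∈ F₄(F₂, ⋉), then |V(G)| ≤ 8. Here ⋉ is the graph on vertex set {1,2,3,4,5} with edge set {12, 13, 14, 15, 45} (a triangle on {1,4,5} with two pendant vertices 2 and 3 attached to vertex 1). -/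
/-! The adjacency pattern of `⋉` over `F₂` can be completed to a matrix of rank at most `3` in exactly
three ways, with diagonals `(0,0,0,1,1)`, `(1,0,0,1,1)` and `(1,1,1,1,1)`, and in all three the
principal submatrix on the vertices `0, 1, 3` is invertible. Hence a rank-`3` matrix of a graph
containing `⋉` is determined by its rows on `0, 1, 3`: each entry `A u v` is the value of an explicit
bilinear form `rankForm i` at the columns of `u` and `v`. So `mr(G) ≤ 3` holds if and only if for one
of the three completions `i` every pair of distinct vertices is `Consistent`
(`minRank_le_three`, `exists_consistent`).

If `mr(G) ≥ 4`, each completion has an inconsistent pair. It remains to show that three vertices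
together with the copy of `⋉` carry inconsistent pairs for all three completions
(`exists_three_obstruct`): in a graph with at least nine vertices one may then delete another vertex
without making the minimum rank drop to `3`. Write `x` for the adjacency vector of a vertex outside the
copy. Being consistent with the copy means `x 1 = x 2, x 3 = x 4` for completions `0` and `1`, so a
vertex violating this, with an inconsistent pair for completion `2`, is enough. Otherwise the forms
of `0` and `1` differ by `x 1 * y 1`, those of `1` and `2` agree on vectors with `x 0 = x 3`, and
`x 0 ≠ x 3` makes a vertex inconsistent with the copy for completion `2`; so a pair inconsistent for
`1` also obstructs `2`. If no single pair is
inconsistent for both `0` and `1`, then on the vertices with `x 1 = 1` every pair is inconsistent for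
exactly one of `0` and `1`; this is a 2-colouring of the edges of a complete graph using both colours,
and some triple sees both (`exists_mixed_triple`). -/

open Matrix

/-- The graph `⋉` on `{0, 1, 2, 3, 4}` with edges `01, 02, 03, 04, 34`
(edges `12, 13, 14, 15, 45` on `{1, …, 5}` in 1-indexed notation): a triangle on
`{0, 3, 4}` with the two pendant vertices `1` and `2` attached to vertex `0`. -/
def ltimesGraph : SimpleGraph (Fin 5) :=
  SimpleGraph.fromEdgeSet {s(0,1), s(0,2), s(0,3), s(0,4), s(3,4)}

/-! ### The three completions of `⋉` -/

/-- The diagonals of the three rank-`3` matrices over `F₂` with the pattern of `⋉`. -/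
def ltDiag : Fin 3 → Fin 5 → ZMod 2 :=
  ![![0, 0, 0, 1, 1], ![1, 0, 0, 1, 1], ![1, 1, 1, 1, 1]]

/-- The adjacency matrix of `⋉` over `F₂`. -/
def ltAdj : Fin 5 → Fin 5 → ZMod 2 :=
  ![![0, 1, 1, 1, 1], ![1, 0, 0, 0, 0], ![1, 0, 0, 0, 0], ![1, 0, 0, 0, 1], ![1, 0, 0, 1, 0]]

/-- The `i`-th rank-`3` matrix with the pattern of `⋉`. -/
def ltMat (i : Fin 3) (k l : Fin 5) : ZMod 2 := if k = l then ltDiag i l else ltAdj k l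

/-- The bilinear form given by the inverse of the principal submatrix of `ltMat i` on `0, 1, 3`,
applied to the coordinates `0, 1, 3` of the two vectors. -/
def rankForm (i : Fin 3) (x y : Fin 5 → ZMod 2) : ZMod 2 :=
  ![x 0 * y 1 + x 1 * y 0 + x 1 * y 1 + x 3 * y 1 + x 1 * y 3 + x 3 * y 3,
    x 0 * y 1 + x 1 * y 0 + x 3 * y 1 + x 1 * y 3 + x 3 * y 3,
    (x 0 + x 1 + x 3) * y 0 + (x 0 + x 3) * y 1 + (x 0 + x 1) * y 3] i

open Classical in
/-- The adjacency indicator of `G` with values in `F₂`. -/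
noncomputable def adjInd {V : Type*} (G : SimpleGraph V) (u v : V) : ZMod 2 :=
  if G.Adj u v then 1 else 0

open Classical in
/-- The row of `u` on the copy `a` of `⋉`, with the `i`-th diagonal filled in on the copy. -/
noncomputable def extRow {V : Type*} (G : SimpleGraph V) (a : Fin 5 → V) (i : Fin 3) (u : V)
    (k : Fin 5) : ZMod 2 :=
  if u = a k then ltDiag i k else adjInd G u (a k)

/-- The adjacency of `u` and `v` is the one forced by the `i`-th completion of `⋉`. -/
def Consistent {V : Type*} (G : SimpleGraph V) (a : Fin 5 → V) (i : Fin 3) (u v : V) : Prop :=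
  adjInd G u v = rankForm i (extRow G a i u) (extRow G a i v)

lemma rankForm_comm (i : Fin 3) (x y : Fin 5 → ZMod 2) : rankForm i x y = rankForm i y x := by
  fin_cases i <;> simp [rankForm] <;> ring

lemma adjInd_comm {V : Type*} (G : SimpleGraph V) (u v : V) : adjInd G u v = adjInd G v u := by
  have h := G.adj_comm u v
  by_cases hv : G.Adj v u <;> simp [adjInd, h, hv]

lemma Consistent.symm {V : Type*} {G : SimpleGraph V} {a : Fin 5 → V} {i : Fin 3} {u v : V}
    (h : Consistent G a i u v) : Consistent G a i v u := by
  unfold Consistent at *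
  rw [adjInd_comm, rankForm_comm, h]

lemma adjInd_embedding {V : Type*} {G : SimpleGraph V} (a : ltimesGraph ↪g G) (k l : Fin 5) :
    adjInd G (a k) (a l) = ltAdj k l := by
  have h : G.Adj (a k) (a l) ↔ ltimesGraph.Adj k l := a.map_rel_iff
  have h' : ltimesGraph.Adj k l ↔ ltAdj k l = 1 := by
    simp only [ltimesGraph, SimpleGraph.fromEdgeSet_adj]
    fin_cases k <;> fin_cases l <;> simp [ltAdj]
  have h'' : ltAdj k l = 0 ∨ ltAdj k l = 1 := by
    clear h h'
    revert k l
    decide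
  rcases h'' with h'' | h'' <;> simp [adjInd, h, h', h'']

lemma extRow_embedding {V : Type*} {G : SimpleGraph V} (a : ltimesGraph ↪g G) (i : Fin 3)
    (k : Fin 5) : extRow G a i (a k) = ltMat i k := by
  ext l
  simp [extRow, ltMat, adjInd_embedding]

lemma extRow_outer {V : Type*} {G : SimpleGraph V} {a : Fin 5 → V} {u : V}
    (hu : u ∉ Set.range a) (i : Fin 3) : extRow G a i u = fun k => adjInd G u (a k) := by
  ext k
  have : u ≠ a k := fun h => hu ⟨k, h.symm⟩
  simp [extRow, this]

lemma consistent_copy {V : Type*} {G : SimpleGraph V} (a : ltimesGraph ↪g G) (i : Fin 3)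
    {k l : Fin 5} (h : k ≠ l) : Consistent G a i (a k) (a l) := by
  unfold Consistent
  rw [extRow_embedding, extRow_embedding, adjInd_embedding]
  revert i k l
  decide

lemma consistent_outer_copy {V : Type*} {G : SimpleGraph V} (a : ltimesGraph ↪g G) (i : Fin 3)
    {u : V} (hu : u ∉ Set.range a) (k : Fin 5) :
    Consistent G a i u (a k) ↔
      adjInd G u (a k) = rankForm i (fun k => adjInd G u (a k)) (ltMat i k) := by
  unfold Consistent
  rw [extRow_embedding, extRow_outer hu]

/-! ### Minimum rank at most three -/

lemma isGraphMatrix_iff {V : Type*} (G : SimpleGraph V) (A : Matrix V V (ZMod 2)) :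
    IsGraphMatrix (ZMod 2) G A ↔ A.IsSymm ∧ ∀ i j, i ≠ j → A i j = adjInd G i j := by
  have key : ∀ i j, (A i j ≠ 0 ↔ G.Adj i j) ↔ A i j = adjInd G i j := by
    intro i j
    unfold adjInd
    generalize A i j = z
    by_cases hp : G.Adj i j <;> simp only [hp, if_true, if_false] <;> revert z <;> decide
  exact and_congr_right fun _ => forall₃_congr fun i j _ => key i j

lemma minRank_le_three {V : Type*} [Fintype V] {G : SimpleGraph V} {a : Fin 5 → V} {i : Fin 3}
    (h : ∀ u v, u ≠ v → Consistent G a i u v) : minRank (ZMod 2) G ≤ 3 := by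
  classical
  let A : Matrix V V (ZMod 2) := .of fun u v => rankForm i (extRow G a i u) (extRow G a i v)
  let X : Matrix V (Fin 3) (ZMod 2) :=
    .of fun u => ![extRow G a i u 0, extRow G a i u 1, extRow G a i u 3]
  -- `C` writes the form in terms of the coordinates `0, 1, 3`, so that `A` factors through `F₂³`.
  let C : Fin 3 → Matrix (Fin 3) (Fin 3) (ZMod 2) :=
    ![!![0, 1, 0; 1, 1, 1; 0, 1, 1], !![0, 1, 0; 1, 0, 1; 0, 1, 1], !![1, 1, 1; 1, 0, 1; 1, 1, 0]]
  have hA : A = X * (C i * Xᵀ) := by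
    ext u v
    simp only [A, X, C, Matrix.mul_apply, Fin.sum_univ_three, Matrix.transpose_apply, Matrix.of_apply]
    generalize extRow G a i u = x
    generalize extRow G a i v = y
    clear * -
    fin_cases i <;> simp [rankForm] <;> ring
  have hr : A.rank ≤ 3 := by
    rw [hA]
    exact (Matrix.rank_mul_le_left _ _).trans ((Matrix.rank_le_card_width X).trans (by simp))
  have hA' : IsGraphMatrix (ZMod 2) G A := by
    refine (isGraphMatrix_iff G A).2 ⟨?_, fun u v huv => Eq.symm (h u v huv)⟩
    ext u v
    exact rankForm_comm _ _ _
  exact (Nat.sInf_le (s := {r | ∃ A : Matrix V V (ZMod 2), IsGraphMatrix (ZMod 2) G A ∧ A.rank = r})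
    ⟨A, hA', rfl⟩).trans hr

lemma det_submatrix_eq_zero {V : Type*} [Fintype V] {A : Matrix V V (ZMod 2)} (h : A.rank ≤ 3)
    (r s : Fin 4 → V) : (A.submatrix r s).det = 0 := by
  by_contra hd
  have h1 := Matrix.rank_of_isUnit _ ((Matrix.isUnit_iff_isUnit_det _).2 (Ne.isUnit hd))
  have h2 := Matrix.rank_submatrix_le A r s
  rw [Fintype.card_fin] at h1
  omega

/-- The determinant of a `4 × 4` matrix over `F₂`, where signs do not matter. -/
lemma det_four (M : Matrix (Fin 4) (Fin 4) (ZMod 2)) : M.det =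
    M 0 0 * (M 1 1 * (M 2 2 * M 3 3 + M 2 3 * M 3 2) + M 1 2 * (M 2 1 * M 3 3 + M 2 3 * M 3 1)
      + M 1 3 * (M 2 1 * M 3 2 + M 2 2 * M 3 1))
    + M 0 1 * (M 1 0 * (M 2 2 * M 3 3 + M 2 3 * M 3 2) + M 1 2 * (M 2 0 * M 3 3 + M 2 3 * M 3 0)
      + M 1 3 * (M 2 0 * M 3 2 + M 2 2 * M 3 0))
    + M 0 2 * (M 1 0 * (M 2 1 * M 3 3 + M 2 3 * M 3 1) + M 1 1 * (M 2 0 * M 3 3 + M 2 3 * M 3 0)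
      + M 1 3 * (M 2 0 * M 3 1 + M 2 1 * M 3 0))
    + M 0 3 * (M 1 0 * (M 2 1 * M 3 2 + M 2 2 * M 3 1) + M 1 1 * (M 2 0 * M 3 2 + M 2 2 * M 3 0)
      + M 1 2 * (M 2 0 * M 3 1 + M 2 1 * M 3 0)) := by
  rw [Matrix.det_succ_row_zero]
  simp [Matrix.det_fin_three, Fin.sum_univ_succ, Fin.succAbove, CharTwo.sub_eq_add, CharTwo.neg_eq]
  ring

/-- Two vanishing `4 × 4` minors leave only three diagonals for the copy of `⋉`. -/
lemma diag_eq {d : Fin 5 → ZMod 2} {B : Matrix (Fin 5) (Fin 5) (ZMod 2)}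
    (hB : ∀ k l, B k l = if k = l then d l else ltAdj k l)
    (h1 : (B.submatrix ![0, 1, 2, 3] ![0, 1, 2, 3]).det = 0)
    (h2 : (B.submatrix ![0, 1, 3, 4] ![0, 2, 3, 4]).det = 0) : ∃ i, d = ltDiag i := by
  rw [det_four] at h1 h2
  simp [hB, ltAdj] at h1 h2
  have key : ∀ d : Fin 5 → ZMod 2,
      d 0 * (d 1 * (d 2 * d 3)) + d 2 * d 3 + d 1 * d 3 + d 1 * d 2 = 0 → d 3 * d 4 + 1 = 0 →
        ∃ i, ∀ k, d k = ltDiag i k := by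
    decide +kernel
  obtain ⟨i, hi⟩ := key d h1 h2
  exact ⟨i, funext hi⟩

lemma exists_consistent {V : Type*} [Fintype V] {G : SimpleGraph V} (a : ltimesGraph ↪g G)
    (h : minRank (ZMod 2) G ≤ 3) : ∃ i, ∀ u v, u ≠ v → Consistent G a i u v := by
  classical
  obtain ⟨A, hA, hAr⟩ : ∃ A : Matrix V V (ZMod 2), IsGraphMatrix (ZMod 2) G A ∧ A.rank ≤ 3 := by
    have hne : {r : ℕ | ∃ A : Matrix V V (ZMod 2), IsGraphMatrix (ZMod 2) G A ∧ A.rank = r}.Nonempty := by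
      refine ⟨_, Matrix.of fun u v => adjInd G u v, ?_, rfl⟩
      rw [isGraphMatrix_iff]
      exact ⟨by ext u v; exact adjInd_comm _ _ _, fun _ _ _ => rfl⟩
    obtain ⟨A, hA, hr⟩ := Nat.sInf_mem hne
    exact ⟨A, hA, hr.trans_le h⟩
  rw [isGraphMatrix_iff] at hA
  obtain ⟨hs, hadj⟩ := hA
  have hcopy : ∀ k l, A (a k) (a l) = if k = l then A (a l) (a l) else ltAdj k l := by
    intro k l
    split_ifs with hkl
    · rw [hkl]
    · rw [hadj _ _ (by simpa using hkl), adjInd_embedding]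
  obtain ⟨i, hi⟩ := diag_eq (d := fun k => A (a k) (a k)) (B := A.submatrix a a) hcopy
    (by rw [Matrix.submatrix_submatrix]; exact det_submatrix_eq_zero hAr _ _)
    (by rw [Matrix.submatrix_submatrix]; exact det_submatrix_eq_zero hAr _ _)
  have hrow : ∀ u k, A u (a k) = extRow G a i u k := by
    intro u k
    unfold extRow
    split_ifs with huk
    · rw [huk, ← hi]
    · exact hadj _ _ huk
  refine ⟨i, fun u v huv => ?_⟩
  unfold Consistent
  rw [← hadj u v huv]
  have hd := det_submatrix_eq_zero hAr ![a 0, a 1, a 3, u] ![a 0, a 1, a 3, v]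
  rw [det_four] at hd
  have hcol : ∀ k, A (a k) v = extRow G a i v k := fun k => by rw [← hrow, hs.apply]
  simp [hrow, hcol, extRow_embedding] at hd
  generalize extRow G a i u = x at *
  generalize extRow G a i v = y at *
  generalize A u v = z at *
  clear * - hd
  have h2 : (2 : ZMod 2) = 0 := CharTwo.two_eq_zero
  fin_cases i <;> simp [ltMat, ltDiag, ltAdj, rankForm] at hd ⊢
  · linear_combination hd - (x 0 * y 1 + x 1 * y 0 + x 1 * y 1 + x 3 * y 1 + x 1 * y 3 + x 3 * y 3) * h2
  · linear_combination hd - (x 0 * y 1 + x 1 * y 0 + x 3 * y 1 + x 1 * y 3 + x 3 * y 3 + x 1 * y 1) * h2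
  · linear_combination hd - ((x 0 + x 1 + x 3) * y 0 + (x 0 + x 3) * y 1 + (x 0 + x 1) * y 3
      + z + x 3 * y 3 + x 1 * y 1) * h2

/-! ### Three vertices obstruct all completions -/

lemma consistent_zero_iff : ∀ x : Fin 5 → ZMod 2,
    (∀ k, x k = rankForm 0 x (ltMat 0 k)) ↔ x 1 = x 2 ∧ x 3 = x 4 := by
  decide +kernel

lemma consistent_one_iff : ∀ x : Fin 5 → ZMod 2,
    (∀ k, x k = rankForm 1 x (ltMat 1 k)) ↔ x 1 = x 2 ∧ x 3 = x 4 := by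
  decide +kernel

lemma consistent_two_iff : ∀ x : Fin 5 → ZMod 2, x 1 = x 2 → x 3 = x 4 →
    ((∀ k, x k = rankForm 2 x (ltMat 2 k)) ↔ x 0 = x 3) := by
  decide +kernel

lemma rankForm_zero_eq (x y : Fin 5 → ZMod 2) :
    rankForm 0 x y = rankForm 1 x y + x 1 * y 1 := by
  simp [rankForm]
  ring

lemma rankForm_two_eq {x y : Fin 5 → ZMod 2} (hx : x 0 = x 3) (hy : y 0 = y 3) :
    rankForm 2 x y = rankForm 1 x y := by
  simp [rankForm, hx, hy]
  linear_combination (x 3 * y 3) * (CharTwo.two_eq_zero (R := ZMod 2))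

/-- In a complete graph with edges coloured by `R` and `¬ R` where both colours occur, every vertex `w`
lies in a triple that shows both. -/
lemma exists_mixed_triple {T : Type*} {R : T → T → Prop} {p q p' q' : T} (hpq : p ≠ q) (hn : ¬ R p q) (hpq' : p' ≠ q') (hr : R p' q') (w : T) :
    ∃ y z, (∃ s t, s ∈ ({w, y, z} : Set T) ∧ t ∈ ({w, y, z} : Set T) ∧ s ≠ t ∧ ¬ R s t) ∧
      ∃ s t, s ∈ ({w, y, z} : Set T) ∧ t ∈ ({w, y, z} : Set T) ∧ s ≠ t ∧ R s t := by
  by_cases h1 : ∃ y, w ≠ y ∧ ¬ R w y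
  · obtain ⟨y, hy, hny⟩ := h1
    by_cases h2 : ∃ z, w ≠ z ∧ R w z
    · obtain ⟨z, hz, hrz⟩ := h2
      exact ⟨y, z, ⟨w, y, by simp, by simp, hy, hny⟩, w, z, by simp, by simp, hz, hrz⟩
    · push Not at h2
      have : w ≠ p' := by
        rintro rfl
        exact h2 _ hpq' hr
      exact ⟨p', q', ⟨w, p', by simp, by simp, this, h2 _ this⟩, p', q', by simp, by simp, hpq', hr⟩
  · push Not at h1
    have : w ≠ p := by
      rintro rfl
      exact hn (h1 _ hpq)
    exact ⟨p, q, ⟨p, q, by simp, by simp, hpq, hn⟩, w, p, by simp, by simp, this, h1 _ this⟩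

/-- `S` together with the copy `a` of `⋉` contains a pair inconsistent with the `i`-th completion. -/
def Obstructs {V : Type*} (G : SimpleGraph V) (a : Fin 5 → V) (S : Set V) (i : Fin 3) : Prop :=
  ∃ u v, u ∈ S ∪ Set.range a ∧ v ∈ S ∪ Set.range a ∧ u ≠ v ∧ ¬ Consistent G a i u v

lemma Obstructs.mono {V : Type*} {G : SimpleGraph V} {a : Fin 5 → V} {S T : Set V} {i : Fin 3}
    (h : Obstructs G a S i) (hST : S ⊆ T) : Obstructs G a T i := by
  obtain ⟨u, v, hu, hv, h⟩ := h
  exact ⟨u, v, Set.union_subset_union_left _ hST hu, Set.union_subset_union_left _ hST hv, h⟩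

lemma exists_three_obstruct {V : Type*} {G : SimpleGraph V} (a : ltimesGraph ↪g G)
    (h : ∀ i, ∃ u v, u ≠ v ∧ ¬ Consistent G a i u v) :
    ∃ x y z : V, ∀ i, Obstructs G a {x, y, z} i := by
  have hpair : ∀ {u v i}, u ≠ v → ¬ Consistent G a i u v → Obstructs G a {u, v} i :=
    fun {u v i} huv hc => ⟨u, v, by simp, by simp, huv, hc⟩
  have hsingle : ∀ {u i}, u ∉ Set.range a →
      ¬ (∀ k, Consistent G a i u (a k)) → Obstructs G a {u} i := by
    intro u i hu hc
    push Not at hc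
    obtain ⟨k, hk⟩ := hc
    exact ⟨u, a k, by simp, by simp, fun h => hu ⟨k, h.symm⟩, hk⟩
  set e : V → Fin 5 → ZMod 2 := fun u k => adjInd G u (a k) with he
  by_cases hbad : ∃ u, u ∉ Set.range a ∧ ¬ (e u 1 = e u 2 ∧ e u 3 = e u 4)
  · obtain ⟨u, hu, hb⟩ := hbad
    obtain ⟨p, q, hpq, h2⟩ := h 2
    refine ⟨u, p, q, fun i => ?_⟩
    fin_cases i
    · refine (hsingle (i := 0) hu ?_).mono (by simp)
      simp only [consistent_outer_copy a _ hu]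
      exact fun hc => hb ((consistent_zero_iff _).1 hc)
    · refine (hsingle (i := 1) hu ?_).mono (by simp)
      simp only [consistent_outer_copy a _ hu]
      exact fun hc => hb ((consistent_one_iff _).1 hc)
    · exact (hpair hpq h2).mono (by simp)
  push Not at hbad
  -- Outside the copy every vertex is now consistent with it for completions `0` and `1`.
  have hcopy : ∀ u, u ∉ Set.range a → ∀ k, Consistent G a 0 u (a k) ∧ Consistent G a 1 u (a k) := by
    intro u hu k
    rw [consistent_outer_copy a _ hu, consistent_outer_copy a _ hu]
    exact ⟨(consistent_zero_iff _).2 (hbad u hu) k, (consistent_one_iff _).2 (hbad u hu) k⟩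
  have houter : ∀ i : Fin 3, i ≠ 2 → ∃ u v, u ∉ Set.range a ∧ v ∉ Set.range a ∧ u ≠ v ∧
      ¬ Consistent G a i u v := by
    intro i hi
    have hi' : ∀ u, u ∉ Set.range a → ∀ k, Consistent G a i u (a k) := by
      intro u hu k
      have := hcopy u hu k
      fin_cases i
      · exact this.1
      · exact this.2
      · exact absurd rfl hi
    obtain ⟨u, v, huv, hc⟩ := h i
    by_cases hu : u ∈ Set.range a
    · obtain ⟨k, rfl⟩ := hu
      by_cases hv : v ∈ Set.range a
      · obtain ⟨l, rfl⟩ := hv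
        exact absurd (consistent_copy a i (fun hkl => huv (by rw [hkl]))) hc
      · exact absurd (hi' v hv k).symm hc
    · by_cases hv : v ∈ Set.range a
      · obtain ⟨l, rfl⟩ := hv
        exact absurd (hi' u hu l) hc
      · exact ⟨u, v, hu, hv, huv, hc⟩
  have hcons : ∀ {u v}, u ∉ Set.range a → v ∉ Set.range a → ∀ i,
      (Consistent G a i u v ↔ adjInd G u v = rankForm i (e u) (e v)) := by
    intro u v hu hv i
    unfold Consistent
    rw [extRow_outer hu, extRow_outer hv]
  have htwo : ∀ {u}, u ∉ Set.range a → e u 0 ≠ e u 3 → Obstructs G a {u} 2 := by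
    intro u hu hne
    refine hsingle hu ?_
    simp only [consistent_outer_copy a _ hu]
    exact fun hc => hne ((consistent_two_iff _ (hbad u hu).1 (hbad u hu).2).1 hc)
  have hone_two : ∀ {u v}, u ∉ Set.range a → v ∉ Set.range a → u ≠ v → ¬ Consistent G a 1 u v →
      Obstructs G a {u, v} 2 := by
    intro u v hu hv huv hc
    by_cases h1 : e u 0 = e u 3
    · by_cases h2 : e v 0 = e v 3
      · refine hpair huv ?_
        rwa [hcons hu hv, rankForm_two_eq h1 h2, ← hcons hu hv]
      · exact (htwo hv h2).mono (by simp)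
    · exact (htwo hu h1).mono (by simp)
  by_cases hboth : ∃ u v, u ∉ Set.range a ∧ v ∉ Set.range a ∧ u ≠ v ∧
      ¬ Consistent G a 0 u v ∧ ¬ Consistent G a 1 u v
  · obtain ⟨u, v, hu, hv, huv, h0, h1⟩ := hboth
    refine ⟨u, v, v, fun i => ?_⟩
    fin_cases i
    · exact (hpair huv h0).mono (by simp)
    · exact (hpair huv h1).mono (by simp)
    · exact (hone_two hu hv huv h1).mono (by simp)
  push Not at hboth
  have hbit : ∀ s t f g : ZMod 2, s ≠ f → s = f + t * g → t = 1 ∧ g = 1 := by decide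
  have hbit' : ∀ s t f g : ZMod 2, s ≠ f + t * g → s = f → t = 1 ∧ g = 1 := by decide
  -- The vertices on which completions `0` and `1` disagree about every pair.
  let T := {u : V // u ∉ Set.range a ∧ e u 1 = 1}
  have hT : ∀ s t : T, Consistent G a 1 s t → ¬ Consistent G a 0 s t := by
    intro s t h1 h0
    rw [hcons s.2.1 t.2.1] at h1 h0
    rw [rankForm_zero_eq, s.2.2, t.2.2, ← h1] at h0
    simp at h0
  obtain ⟨p, q, hp, hq, hpq, h0⟩ := houter 0 (by decide)
  obtain ⟨p', q', hp', hq', hpq', h1⟩ := houter 1 (by decide)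
  have h01 : Consistent G a 1 p q := hboth p q hp hq hpq h0
  have h10 : Consistent G a 0 p' q' := by
    by_contra hc
    exact h1 (hboth p' q' hp' hq' hpq' hc)
  have hpT : e p 1 = 1 ∧ e q 1 = 1 := by
    rw [hcons hp hq] at h0 h01
    rw [rankForm_zero_eq] at h0
    exact hbit' _ _ _ _ h0 h01
  have hpT' : e p' 1 = 1 ∧ e q' 1 = 1 := by
    rw [hcons hp' hq'] at h1 h10
    rw [rankForm_zero_eq] at h10
    exact hbit _ _ _ _ h1 h10
  obtain ⟨y, z, ⟨s, t, hs, ht, hst, hn⟩, s', t', hs', ht', hst', hr⟩ :=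
    exists_mixed_triple (T := T) (R := fun s t => ¬ Consistent G a 1 s t)
      (p := ⟨p, hp, hpT.1⟩) (q := ⟨q, hq, hpT.2⟩)
      (p' := ⟨p', hp', hpT'.1⟩) (q' := ⟨q', hq', hpT'.2⟩) 
      (fun hc => hpq (congrArg Subtype.val hc)) (by simpa using h01)
      (fun hc => hpq' (congrArg Subtype.val hc)) h1 ⟨p, hp, hpT.1⟩
  have hmem : ∀ r : T, r ∈ ({⟨p, hp, hpT.1⟩, y, z} : Set T) → (r : V) ∈ ({p, (y : V), (z : V)} : Set V) := by
    rintro r (rfl | rfl | rfl) <;> simp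
  have hsub : ({(s' : V), (t' : V)} : Set V) ⊆ {p, (y : V), (z : V)} := by
    rintro r (rfl | rfl)
    exacts [hmem _ hs', hmem _ ht']
  have hst0 : (s : V) ≠ t := fun hc => hst (Subtype.ext hc)
  have hst1 : (s' : V) ≠ t' := fun hc => hst' (Subtype.ext hc)
  refine ⟨p, y, z, fun i => ?_⟩
  fin_cases i
  · exact (hpair hst0 (hT s t (not_not.1 hn))).mono (by
      rintro r (rfl | rfl)
      exacts [hmem _ hs, hmem _ ht])
  · exact (hpair hst1 hr).mono hsub
  · exact (hone_two s'.2.1 t'.2.1 hst1 hr).mono hsub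

/-- If `G ∈ F₄(F₂, ⋉)`, then `G` has at most 8 vertices. -/
theorem card_le_eight_of_forbRel_ltimes {V : Type*} [Fintype V] [DecidableEq V]
    (G : SimpleGraph V) (h : MemForbRel (ZMod 2) 4 ltimesGraph G) :
    Fintype.card V ≤ 8 := by
  obtain ⟨hG, a, ha⟩ := h
  have hobs : ∀ i, ∃ u v, u ≠ v ∧ ¬ Consistent G a i u v := by
    intro i
    by_contra hc
    push Not at hc
    have := minRank_le_three hc
    omega
  obtain ⟨x, y, z, hxyz⟩ := exists_three_obstruct a hobs
  by_contra hcard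
  obtain ⟨w, hw⟩ : ∃ w, w ∉ ({x, y, z} : Finset V) ∪ Finset.univ.image a := by
    by_contra hc
    push Not at hc
    have h1 : Fintype.card V ≤ _ := Finset.card_le_card (s := Finset.univ) (fun v _ => hc v)
    have h2 := Finset.card_union_le ({x, y, z} : Finset V) (Finset.univ.image a)
    have h3 : ({x, y, z} : Finset V).card ≤ 3 := Finset.card_le_three
    have h4 : (Finset.univ.image a).card ≤ 5 := Finset.card_image_le
    omega
  have hwS : w ∉ ({x, y, z} : Set V) ∪ Set.range a := by
    simpa [and_assoc] using hw
  have hwa : w ∉ Set.range a := fun hc => hwS (Or.inr hc)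
  -- The copy of `⋉` survives in `G - w`.
  let b : ltimesGraph ↪g deleteVert G w :=
    { toFun := fun k => ⟨a k, fun hk => hwa ⟨k, hk⟩⟩
      inj' := fun k l hkl => a.injective (congrArg Subtype.val hkl)
      map_rel_iff' := a.map_adj_iff }
  obtain ⟨i, hi⟩ := exists_consistent b (by have := ha w hwa; omega)
  obtain ⟨u, v, hu, hv, huv, hc⟩ := hxyz i
  have hext : ∀ s (hs : s ≠ w), extRow (deleteVert G w) b i ⟨s, hs⟩ = extRow G a i s := by
    intro s hs
    ext k
    have h1 : ((⟨s, hs⟩ : {u : V // u ≠ w}) = b k) ↔ s = a k := Subtype.ext_iff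
    by_cases hk : s = a k
    · simp only [extRow, h1, if_pos hk]
    · simp only [extRow, h1, hk, if_false]
      rfl
  have hne : ∀ s ∈ ({x, y, z} : Set V) ∪ Set.range a, s ≠ w := fun s hs hsw => hwS (hsw ▸ hs)
  have := hi ⟨u, hne u hu⟩ ⟨v, hne v hv⟩ (by simpa using huv)
  unfold Consistent at this
  rw [hext, hext] at this
  exact hc this
end
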